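/- Let λ be an infinite cardinal and let Q_λ = (⊕_λ ℚ) ⊕ ⊕_{p prime} (⊕_λ ℤ(p^∞)). If D is a divisible abelian group of cardinality λ and there exists an injective group homomorphism from Q_λ into D, then D is isomorphic to Q_λ. -/

import Mathlib

universe u

/-- The group `ℚ/ℤ`. -/
abbrev RatCircle : Type := ℚ ⧸ AddSubgroup.zmultiples (1 : ℚ)

/-- The Prüfer `p`-group `ℤ(p^∞)`: the subgroup of `ℚ/ℤ` of elements annihilated by a
power of `p` (its `p`-primary component). -/
def Prufer (p : Nat.Primes) : AddSubgroup RatCircle :=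
  haveI : Fact (Nat.Prime (p : ℕ)) := ⟨p.2⟩
  AddCommGroup.primaryComponent RatCircle (p : ℕ)

/-- `Q_λ = (⊕_λ ℚ) ⊕ ⊕_{p prime} (⊕_λ ℤ(p^∞))`. -/
abbrev QLambda (lam : Cardinal.{u}) : Type u :=
  (DirectSum lam.out fun _ => ℚ) ×
    DirectSum Nat.Primes fun p => DirectSum lam.out fun _ => ↥(Prufer p)

open DirectSum

/-- Divisibility. -/
def Dv (A : Type*) [AddCommGroup A] : Prop := ∀ d : A, ∀ n : ℕ, 1 ≤ n → ∃ x : A, n • x = d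

theorem Dv.ext {A : Type*} [AddCommGroup A] (hA : Dv A) {M N : Type*} [AddCommGroup M]
    [AddCommGroup N] (f : M →+ N) (hf : Function.Injective f) (g : M →+ A) :
    ∃ h : N →+ A, ∀ x, h (f x) = g x := by
  classical
  have key : ∀ (n : ℤ) (a : A), n ≠ 0 → ∃ x, n • x = a := by
    intro n a hn
    obtain ⟨x, hx⟩ := hA a n.natAbs (by omega)
    rcases Int.natAbs_eq n with h | h
    · exact ⟨x, by rw [h, natCast_zsmul, hx]⟩
    · exact ⟨-x, by rw [h, neg_smul, smul_neg, neg_neg, natCast_zsmul, hx]⟩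
  letI : DivisibleBy A ℤ :=
    { div := fun a n => if h : n = 0 then 0 else (key n a h).choose
      div_zero := fun a => by simp
      div_cancel := fun {n} a h => by
        simp only [h, dif_neg, not_false_eq_true]
        exact (key n a h).choose_spec }
  obtain ⟨h, hh⟩ := (Module.Baer.of_divisible A).extension_property_addMonoidHom f hf g
  exact ⟨h, fun x => DFunLike.congr_fun hh x⟩

theorem Dv.prod {A B : Type*} [AddCommGroup A] [AddCommGroup B] (hA : Dv A) (hB : Dv B) :
    Dv (A × B) := by
  rintro ⟨a, b⟩ n hn
  obtain ⟨x, hx⟩ := hA a n hn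
  obtain ⟨y, hy⟩ := hB b n hn
  exact ⟨(x, y), by simp [hx, hy]⟩

theorem Dv.directSum {ι : Type*} {A : ι → Type*} [∀ i, AddCommGroup (A i)]
    (hA : ∀ i, Dv (A i)) : Dv (⨁ i, A i) := by
  classical
  intro d n hn
  induction d using DirectSum.induction_on with
  | zero => exact ⟨0, by simp⟩
  | of i x =>
    obtain ⟨y, hy⟩ := hA i x n hn
    exact ⟨DirectSum.of A i y, by rw [← map_nsmul, hy]⟩
  | add x y hx hy =>
    obtain ⟨a, ha⟩ := hx
    obtain ⟨b, hb⟩ := hy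
    exact ⟨a + b, by rw [smul_add, ha, hb]⟩

theorem Dv.of_surj {A B : Type*} [AddCommGroup A] [AddCommGroup B] (hA : Dv A) (f : A →+ B)
    (hf : Function.Surjective f) : Dv B := by
  intro b n hn
  obtain ⟨a, rfl⟩ := hf b
  obtain ⟨x, rfl⟩ := hA a n hn
  exact ⟨f x, by simp⟩

theorem dv_rat : Dv ℚ := fun d n hn => ⟨d / n, by
  have : (n : ℚ) ≠ 0 := by positivity
  rw [nsmul_eq_mul]; field_simp⟩

theorem mem_prufer (p : Nat.Primes) (x : RatCircle) :
    x ∈ Prufer p ↔ ∃ k : ℕ, (p : ℕ) ^ k • x = 0 := Iff.rfl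

theorem dv_prufer (p : Nat.Primes) : Dv (Prufer p) := by
  rintro ⟨x, hx⟩ n hn
  obtain ⟨k, hk⟩ := (mem_prufer p x).1 hx
  obtain ⟨a, m, hm, rfl⟩ := Nat.exists_eq_pow_mul_and_not_dvd (n := n) (by omega) (p : ℕ) p.2.ne_one
  have hR : Dv RatCircle := dv_rat.of_surj (QuotientAddGroup.mk' _) (QuotientAddGroup.mk'_surjective _)
  obtain ⟨y, hy⟩ := hR x ((p : ℕ) ^ a) (Nat.one_le_pow _ _ p.2.pos)
  have hy' : (p : ℕ) ^ (k + a) • y = 0 := by rw [pow_add, mul_smul, hy, hk]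
  have hc : Nat.Coprime m ((p : ℕ) ^ (k + a)) :=
    (Nat.Coprime.pow_left _ ((Nat.Prime.coprime_iff_not_dvd p.2).2 hm)).symm
  have hc' : IsCoprime (m : ℤ) (((p : ℕ) ^ (k + a) : ℕ) : ℤ) := Nat.isCoprime_iff_coprime.2 hc
  obtain ⟨u, v, huv⟩ := hc'
  have hyP : y ∈ Prufer p := (mem_prufer p y).2 ⟨_, hy'⟩
  refine ⟨⟨u • y, (Prufer p).zsmul_mem hyP u⟩, Subtype.ext ?_⟩
  change ((p : ℕ) ^ a * m) • (u • y) = x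
  have : m • u • y = y := by
    calc m • u • y = (u * (m : ℤ)) • y + v • (((p : ℕ) ^ (k + a) : ℕ) : ℤ) • y := by
          rw [natCast_zsmul _ ((p : ℕ) ^ (k + a)), hy', smul_zero, add_zero, mul_comm, mul_smul, natCast_zsmul]
      _ = y := by rw [smul_smul, ← add_smul, huv, one_smul]
  rw [mul_smul, this, hy]

/-- Splitting. -/
theorem split_of_inj {Q D : Type*} [AddCommGroup Q] [AddCommGroup D] (hQ : Dv Q) (f : Q →+ D)
    (hf : Function.Injective f) : ∃ C : AddSubgroup D, Nonempty (D ≃+ Q × C) := by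
  obtain ⟨r, hr⟩ := hQ.ext f hf (AddMonoidHom.id Q)
  refine ⟨r.ker, ⟨?_⟩⟩
  have hr' : ∀ x, r (f x) = x := hr
  exact
  { toFun := fun d => (r d, ⟨d - f (r d), by simp [AddMonoidHom.mem_ker, hr']⟩)
    invFun := fun x => f x.1 + x.2
    left_inv := fun d => by simp
    right_inv := fun ⟨q, c, hc⟩ => by
      have : r c = 0 := hc
      simp [hr', this]
    map_add' := fun x y => by
      refine Prod.ext (by simp) (Subtype.ext ?_)
      simp only [map_add, Prod.snd_add, AddSubgroup.coe_add]
      abel }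

section equivs
variable {ι κ : Type*} [DecidableEq ι] [DecidableEq κ]

/-- swap -/
noncomputable def swapHom (ι κ : Type*) [DecidableEq ι] [DecidableEq κ]
    (A : ι → κ → Type*) [∀ i k, AddCommGroup (A i k)] :
    (⨁ i, ⨁ k, A i k) →+ (⨁ k, ⨁ i, A i k) :=
  DirectSum.toAddMonoid fun i => DirectSum.toAddMonoid fun k =>
    (DirectSum.of (fun k => ⨁ i, A i k) k).comp (DirectSum.of (fun i => A i k) i)

noncomputable def swapEquiv (A : ι → κ → Type*) [∀ i k, AddCommGroup (A i k)] :
    (⨁ i, ⨁ k, A i k) ≃+ (⨁ k, ⨁ i, A i k) :=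
  AddMonoidHom.toAddEquiv (swapHom ι κ A) (swapHom κ ι fun k i => A i k)
    (by ext i k x : 4; simp [swapHom])
    (by ext i k x : 4; simp [swapHom])

noncomputable def sumProdEquiv (A B : Type*) [AddCommGroup A] [AddCommGroup B] :
    (⨁ _ : ι, A × B) ≃+ (⨁ _ : ι, A) × (⨁ _ : ι, B) :=
  AddMonoidHom.toAddEquiv
    (DirectSum.toAddMonoid fun i =>
      AddMonoidHom.prodMap (DirectSum.of (fun _ : ι => A) i) (DirectSum.of (fun _ : ι => B) i))
    (AddMonoidHom.coprod
      (DirectSum.toAddMonoid fun i =>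
        (DirectSum.of (fun _ : ι => A × B) i).comp (AddMonoidHom.inl A B))
      (DirectSum.toAddMonoid fun i =>
        (DirectSum.of (fun _ : ι => A × B) i).comp (AddMonoidHom.inr A B)))
    (by
      refine DirectSum.addHom_ext fun i x => ?_
      obtain ⟨a, b⟩ := x
      simp [← map_add])
    (by
      apply AddMonoidHom.ext
      rintro ⟨x, y⟩
      have h1 : (AddMonoidHom.comp (AddMonoidHom.comp (DirectSum.toAddMonoid fun i =>
        AddMonoidHom.prodMap (DirectSum.of (fun _ : ι => A) i) (DirectSum.of (fun _ : ι => B) i))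
        (DirectSum.toAddMonoid fun i =>
        (DirectSum.of (fun _ : ι => A × B) i).comp (AddMonoidHom.inl A B))) (AddMonoidHom.id _))
         = AddMonoidHom.inl _ _ := by
        refine DirectSum.addHom_ext fun i x => ?_
        simp
      have h2 : (AddMonoidHom.comp (AddMonoidHom.comp (DirectSum.toAddMonoid fun i =>
        AddMonoidHom.prodMap (DirectSum.of (fun _ : ι => A) i) (DirectSum.of (fun _ : ι => B) i))
        (DirectSum.toAddMonoid fun i =>
        (DirectSum.of (fun _ : ι => A × B) i).comp (AddMonoidHom.inr A B))) (AddMonoidHom.id _))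
         = AddMonoidHom.inr _ _ := by
        refine DirectSum.addHom_ext fun i x => ?_
        simp
      have h1' := DFunLike.congr_fun h1 x
      have h2' := DFunLike.congr_fun h2 y
      simp only [AddMonoidHom.comp_apply, AddMonoidHom.id_apply] at h1' h2'
      simp only [AddMonoidHom.comp_apply, AddMonoidHom.id_apply, AddMonoidHom.coprod_apply, map_add, h1', h2']
      simp)

noncomputable def absorbEquiv (C : Type*) [AddCommGroup C] : (C × ⨁ _ : ℕ, C) ≃+ ⨁ _ : ℕ, C :=
  AddMonoidHom.toAddEquiv
    (AddMonoidHom.coprod (DirectSum.of (fun _ : ℕ => C) 0)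
      (DirectSum.toAddMonoid fun n => DirectSum.of (fun _ : ℕ => C) (n + 1)))
    (DirectSum.toAddMonoid fun n => Nat.casesOn n (AddMonoidHom.inl _ _)
      fun n => (AddMonoidHom.inr _ _).comp (DirectSum.of (fun _ : ℕ => C) n))
    (by
      apply AddMonoidHom.ext
      rintro ⟨c, x⟩
      induction x using DirectSum.induction_on with
      | zero => simp
      | of i x => simp
      | add x y hx hy =>
        have h : ((c, x + y) : C × ⨁ _ : ℕ, C) = (c, x) + (c, y) - (c, 0) := by simp
        rw [h, map_sub, map_add, hx, hy]
        simp)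
    (by
      refine DirectSum.addHom_ext fun n x => ?_
      cases n <;> simp)

noncomputable def mulEquiv (e : ι ≃ κ × ι) (A : Type*) [AddCommGroup A] :
    (⨁ _ : ι, A) ≃+ (⨁ _ : κ, ⨁ _ : ι, A) :=
  AddMonoidHom.toAddEquiv
    (DirectSum.toAddMonoid fun i =>
      (DirectSum.of (fun _ : κ => ⨁ _ : ι, A) (e i).1).comp (DirectSum.of (fun _ : ι => A) (e i).2))
    (DirectSum.toAddMonoid fun k => DirectSum.toAddMonoid fun i =>
      DirectSum.of (fun _ : ι => A) (e.symm (k, i)))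
    (by
      refine DirectSum.addHom_ext fun n x => ?_
      simp)
    (by
      ext i k x : 4
      simp only [AddMonoidHom.comp_apply, AddMonoidHom.id_apply, DirectSum.toAddMonoid_of]
      rw [Equiv.apply_symm_apply])

noncomputable def congrSum {A B : ι → Type*} [∀ i, AddCommGroup (A i)] [∀ i, AddCommGroup (B i)]
    (e : ∀ i, A i ≃+ B i) : (⨁ i, A i) ≃+ (⨁ i, B i) :=
  AddMonoidHom.toAddEquiv
    (DirectSum.toAddMonoid fun i => (DirectSum.of B i).comp (e i).toAddMonoidHom)
    (DirectSum.toAddMonoid fun i => (DirectSum.of A i).comp (e i).symm.toAddMonoidHom)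
    (by refine DirectSum.addHom_ext fun n x => ?_
        simp)
    (by refine DirectSum.addHom_ext fun n x => ?_
        simp)
end equivs

theorem swindle {Q C : Type*} [AddCommGroup Q] [AddCommGroup C] (e : Q ≃+ ⨁ _ : ℕ, Q)
    (hC : Dv C) (f : C →+ Q) (hf : Function.Injective f) : Nonempty ((Q × C) ≃+ Q) := by
  obtain ⟨C', ⟨s⟩⟩ := split_of_inj hC f hf
  let t : Q ≃+ (⨁ _ : ℕ, C) × (⨁ _ : ℕ, C') :=
    e.trans ((congrSum fun _ => s).trans (sumProdEquiv C C'))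
  exact ⟨AddEquiv.prodComm.trans <| ((AddEquiv.refl C).prodCongr t).trans <|
    AddEquiv.prodAssoc.symm.trans <|
    ((absorbEquiv C).prodCongr (AddEquiv.refl _)).trans t.symm⟩

theorem qlambda_nat (lam : Cardinal.{u}) (hlam : Cardinal.aleph0 ≤ lam) :
    Nonempty (QLambda lam ≃+ ⨁ _ : ℕ, QLambda lam) := by
  classical
  have : Nonempty (lam.out ≃ ℕ × lam.out) := by
    rw [← Cardinal.lift_mk_eq']
    simp [Cardinal.aleph0_mul_eq hlam]
  obtain ⟨e⟩ := this
  let a := mulEquiv e ℚ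
  let b : (⨁ p : Nat.Primes, ⨁ _ : lam.out, Prufer p) ≃+
      ⨁ _ : ℕ, ⨁ p : Nat.Primes, ⨁ _ : lam.out, Prufer p :=
    (congrSum fun p => mulEquiv e (Prufer p)).trans (swapEquiv fun p _ => ⨁ _ : lam.out, Prufer p)
  exact ⟨(a.prodCongr b).trans (sumProdEquiv _ _).symm⟩

/-- Injection of direct sums along an injection of index sets and of coefficients. -/
theorem exists_finsupp_emb {ι κ A B : Type*} [AddCommGroup A] [AddCommGroup B] (j : ι ↪ κ)
    (g : A →+ B) (hg : Function.Injective g) :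
    ∃ h : (ι →₀ A) →+ (⨁ _ : κ, B), Function.Injective h := by
  classical
  refine ⟨((finsuppLEquivDirectSum ℤ B κ).toAddEquiv.toAddMonoidHom).comp
    ((Finsupp.embDomain.addMonoidHom j).comp (Finsupp.mapRange.addMonoidHom g)), ?_⟩
  refine (finsuppLEquivDirectSum ℤ B κ).injective.comp ?_
  exact (Finsupp.embDomain_injective j).comp (Finsupp.mapRange_injective g (map_zero g) hg)

theorem exists_free_part {C I : Type u} [AddCommGroup C] (hcard : Cardinal.mk C ≤ Cardinal.mk I) :
    ∃ h : C →+ ⨁ _ : I, ℚ, ∀ x, h x = 0 → ∃ n : ℤ, n ≠ 0 ∧ n • x = 0 := by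
  classical
  obtain ⟨s, hs, hmax⟩ := exists_maximal_linearIndepOn ℤ (id : C → C)
  obtain ⟨j⟩ := Cardinal.le_def _ _ |>.1 ((Cardinal.mk_subtype_le s).trans hcard)
  obtain ⟨g, hg⟩ := exists_finsupp_emb j (Int.castAddHom ℚ) Int.cast_injective
  have hs' : LinearIndependent ℤ (fun x : s => (x : C)) := hs
  obtain ⟨h, hh⟩ := (Dv.directSum fun _ : I => dv_rat).ext
    (Finsupp.linearCombination ℤ (fun x : s => (x : C))).toAddMonoidHom hs' g
  have key : ∀ y ∈ Submodule.span ℤ s, h y = 0 → y = 0 := by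
    intro y hy h0
    rw [← Subtype.range_coe (s := s), ← Finsupp.range_linearCombination] at hy
    obtain ⟨l, rfl⟩ := hy
    have := hh l
    have h1 : g l = 0 := by rw [← this]; exact h0
    rw [hg (h1.trans (map_zero g).symm), map_zero]
  refine ⟨h, fun x hx => ?_⟩
  by_cases hxs : x ∈ s
  · exact ⟨1, one_ne_zero, by rw [key x (Submodule.subset_span hxs) hx, smul_zero]⟩
  · obtain ⟨a, ha, has⟩ := hmax x hxs
    refine ⟨a, ha, key _ (by simpa using has) (by simp [hx])⟩

theorem exists_zmod_prufer (p : Nat.Primes) : ∃ g : ZMod p →+ Prufer p, Function.Injective g := by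
  have hp0 : ((p : ℕ) : ℚ) ≠ 0 := by exact_mod_cast p.2.ne_zero
  let y : RatCircle := QuotientAddGroup.mk (1 / (p : ℕ) : ℚ)
  have hy : (p : ℕ) • y = 0 := by
    change QuotientAddGroup.mk ((p : ℕ) • (1 / (p : ℕ) : ℚ)) = (0 : RatCircle)
    rw [QuotientAddGroup.eq_zero_iff, nsmul_eq_mul, mul_one_div_cancel hp0]
    exact AddSubgroup.mem_zmultiples _
  have hy0 : y ≠ 0 := by
    intro h
    rw [QuotientAddGroup.eq_zero_iff, AddSubgroup.mem_zmultiples_iff] at h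
    obtain ⟨k, hk⟩ := h
    rw [zsmul_eq_mul, mul_one, eq_div_iff hp0] at hk
    have hk' : k * ((p : ℕ) : ℤ) = 1 := by exact_mod_cast hk
    have := Int.eq_one_or_neg_one_of_mul_eq_one' hk'
    have := p.2.two_le
    omega
  let z : Prufer p := ⟨y, (mem_prufer p y).2 ⟨1, by rw [pow_one, hy]⟩⟩
  have hz : (p : ℕ) • z = 0 := Subtype.ext hy
  have hz0 : z ≠ 0 := fun h => hy0 (congrArg Subtype.val h)
  refine ⟨ZMod.lift p ⟨zmultiplesHom _ z, by simpa using hz⟩, ?_⟩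
  rw [ZMod.lift_injective]
  intro m hm
  rw [ZMod.intCast_zmod_eq_zero_iff_dvd]
  have ho : addOrderOf z = p := by
    haveI : Fact (Nat.Prime (p : ℕ)) := ⟨p.2⟩
    exact addOrderOf_eq_prime hz hz0
  have hm' : m • z = 0 := by simpa using hm
  rw [← ho]
  exact addOrderOf_dvd_iff_zsmul_eq_zero.2 hm'

theorem exists_p_part {C I : Type u} [AddCommGroup C] (hcard : Cardinal.mk C ≤ Cardinal.mk I)
    (p : Nat.Primes) :
    ∃ h : C →+ ⨁ _ : I, Prufer p, ∀ x, (p : ℕ) • x = 0 → h x = 0 → x = 0 := by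
  classical
  haveI : Fact (Nat.Prime (p : ℕ)) := ⟨p.2⟩
  let S : AddSubgroup C := (nsmulAddMonoidHom (α := C) (p : ℕ)).ker
  have hS : ∀ x : S, (p : ℕ) • x = 0 := fun x => Subtype.ext x.2
  letI : Module (ZMod p) S := AddCommGroup.zmodModule hS
  let b := Module.Basis.ofVectorSpace (ZMod p) S
  have hle : Cardinal.mk (Module.Basis.ofVectorSpaceIndex (ZMod p) S) ≤ Cardinal.mk I :=
    (Cardinal.mk_subtype_le _).trans ((Cardinal.mk_subtype_le _).trans hcard)
  obtain ⟨j⟩ := Cardinal.le_def _ _ |>.1 hle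
  obtain ⟨g0, hg0⟩ := exists_zmod_prufer p
  obtain ⟨g, hg⟩ := exists_finsupp_emb j g0 hg0
  let e := b.repr.toAddEquiv
  obtain ⟨h, hh⟩ := (Dv.directSum fun _ : I => dv_prufer p).ext S.subtype Subtype.val_injective
    (g.comp e.toAddMonoidHom)
  refine ⟨h, fun x hx h0 => ?_⟩
  have h1 := hh ⟨x, hx⟩
  change h x = g (e ⟨x, hx⟩) at h1
  rw [h0] at h1
  have h2 := hg (h1.symm.trans (map_zero g).symm)
  have h3 := e.map_eq_zero_iff.1 h2
  exact congrArg Subtype.val h3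

theorem prufer_sum_no_torsion {I : Type*} {p q : Nat.Primes} (hpq : p ≠ q)
    (x : ⨁ _ : I, Prufer q) (hx : (p : ℕ) • x = 0) : x = 0 := by
  classical
  refine DFinsupp.ext fun i => ?_
  have h1 : (p : ℕ) • (x i) = 0 := by
    have := DFunLike.congr_fun hx i
    exact this
  obtain ⟨k, hk⟩ := (mem_prufer q _).1 (x i).2
  have h2 : (q : ℕ) ^ k • (x i) = 0 := Subtype.ext hk
  have hc : Nat.Coprime p ((q : ℕ) ^ k) :=
    Nat.Coprime.pow_right _ ((Nat.coprime_primes p.2 q.2).2 fun h => hpq (Subtype.ext h))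
  have hd := Nat.dvd_gcd (addOrderOf_dvd_of_nsmul_eq_zero h1) (addOrderOf_dvd_of_nsmul_eq_zero h2)
  rw [hc.gcd_eq_one, Nat.dvd_one, AddMonoid.addOrderOf_eq_one_iff] at hd
  exact hd

theorem dv_tors (I : Type*) : Dv (⨁ p : Nat.Primes, ⨁ _ : I, Prufer p) :=
  Dv.directSum fun p => Dv.directSum fun _ => dv_prufer p

theorem exists_tors_part {C I : Type u} [AddCommGroup C] (hcard : Cardinal.mk C ≤ Cardinal.mk I) :
    ∃ h : C →+ ⨁ p : Nat.Primes, ⨁ _ : I, Prufer p,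
      ∀ p : Nat.Primes, ∀ x, (p : ℕ) • x = 0 → h x = 0 → x = 0 := by
  classical
  choose h hh using fun p => exists_p_part hcard p
  let P := ∀ p : Nat.Primes, ⨁ _ : I, Prufer p
  let c : (⨁ p : Nat.Primes, ⨁ _ : I, Prufer p) →+ P :=
    DFinsupp.coeFnAddMonoidHom
  have hc : Function.Injective c := DFunLike.coe_injective
  obtain ⟨r, hr⟩ := (dv_tors I).ext c hc (AddMonoidHom.id _)
  let H : C →+ P := AddMonoidHom.pi h
  refine ⟨r.comp H, fun p x hx h0 => ?_⟩
  have h1 : H x = c (DirectSum.of (fun p : Nat.Primes => ⨁ _ : I, Prufer p) p (h p x)) := by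
    funext q
    by_cases hq : p = q
    · subst hq
      exact (DirectSum.of_eq_same (β := fun p : Nat.Primes => ⨁ _ : I, Prufer p) p _).symm
    · refine Eq.trans ?_
        (DirectSum.of_eq_of_ne (β := fun p : Nat.Primes => ⨁ _ : I, Prufer p) p q _ (Ne.symm hq)).symm
      exact prufer_sum_no_torsion hq _ (by
        change (p : ℕ) • h q x = 0
        rw [← map_nsmul, hx, map_zero])
  have h2 : r (H x) = 0 := h0
  rw [h1, hr] at h2
  have h3 := DirectSum.of_injective (β := fun p : Nat.Primes => ⨁ _ : I, Prufer p) p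
    (h2.trans (map_zero _).symm)
  exact hh p x hx h3

theorem exists_emb (lam : Cardinal.{u}) {C : Type u} [AddCommGroup C]
    (hcard : Cardinal.mk C ≤ lam) : ∃ g : C →+ QLambda lam, Function.Injective g := by
  have hcard' : Cardinal.mk C ≤ Cardinal.mk lam.out := by rwa [Cardinal.mk_out]
  obtain ⟨a, ha⟩ := exists_free_part hcard'
  obtain ⟨b, hb⟩ := exists_tors_part hcard'
  refine ⟨a.prod b, (injective_iff_map_eq_zero _).2 fun x hx => ?_⟩
  have hax : a x = 0 := congrArg Prod.fst hx
  have hbx : b x = 0 := congrArg Prod.snd hx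
  obtain ⟨n, hn, hnx⟩ := ha x hax
  have hfin : 0 < addOrderOf x := by
    rw [addOrderOf_pos_iff, isOfFinAddOrder_iff_zsmul_eq_zero]
    exact ⟨n, hn, hnx⟩
  by_contra hx0
  have h1 : addOrderOf x ≠ 1 := fun h => hx0 (AddMonoid.addOrderOf_eq_one_iff.1 h)
  obtain ⟨p, hp, m, hm⟩ := Nat.exists_prime_and_dvd h1
  have h2 : m • x = 0 := hb ⟨p, hp⟩ (m • x)
    (by change p • m • x = 0; rw [smul_smul, ← hm, addOrderOf_nsmul_eq_zero])
    (by rw [map_nsmul, hbx, smul_zero])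
  have h3 := addOrderOf_dvd_of_nsmul_eq_zero h2
  have hm0 : 0 < m := by
    rcases Nat.eq_zero_or_pos m with h | h
    · subst h; omega
    · exact h
  have h4 := Nat.le_of_dvd hm0 h3
  have := hp.two_le
  nlinarith

theorem divisible_iso_QLambda_of_embedding
    (lam : Cardinal.{u}) (hlam : Cardinal.aleph0 ≤ lam)
    (D : Type u) [AddCommGroup D]
    (hdiv : ∀ d : D, ∀ n : ℕ, 1 ≤ n → ∃ x : D, n • x = d)
    (hcard : Cardinal.mk D = lam)
    (f : QLambda lam →+ D) (hf : Function.Injective f) :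
    Nonempty (D ≃+ QLambda lam) := by
  have hQ : Dv (QLambda lam) := (Dv.directSum fun _ => dv_rat).prod (dv_tors _)
  obtain ⟨C, ⟨e⟩⟩ := split_of_inj hQ f hf
  have hD : Dv D := hdiv
  have hC : Dv C := hD.of_surj ((AddMonoidHom.snd _ _).comp e.toAddMonoidHom)
    (Prod.snd_surjective.comp e.surjective)
  obtain ⟨g, hg⟩ := exists_emb lam (C := C) ((Cardinal.mk_subtype_le _).trans hcard.le)
  obtain ⟨t⟩ := qlambda_nat lam hlam
  obtain ⟨s⟩ := swindle t hC g hg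
  exact ⟨e.trans s⟩
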